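/- arXiv:1712.06268 — 2 statements merged into one kernel-verified Lean document; each statement's English description precedes it below -/
import Mathlib

section
/- Let x₀ ∈ ℝⁿ and t₀ > 0. If L(x₀,t₀) contains at least two distinct points and there exists y₁ ∈ L(x₀,t₀) with Dg(y₁) ≠ 0, then u is not (Fréchet) differentiable at (x₀,t₀). -/
open scoped InnerProductSpace Topology ENNReal
open Filter

noncomputable section

/-- Euclidean space `ℝⁿ`. -/
abbrev Euc (n : ℕ) := EuclideanSpace ℝ (Fin n)

/-- Hopf–Lax solution of the Eikonal equation `uₜ + |∇u| = 0` with initial data `g`: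
`u(x,t) = min {g(y) : |y - x| ≤ t}`. -/
def HLu {n : ℕ} (g : Euc n → ℝ) (x : Euc n) (t : ℝ) : ℝ :=
  sInf (g '' Metric.closedBall x t)

/-- The set of minimizers `L(x,t) = {y : |y - x| ≤ t ∧ g y = u(x,t)}`. -/
def HLL {n : ℕ} (g : Euc n → ℝ) (x : Euc n) (t : ℝ) : Set (Euc n) :=
  {y | ‖y - x‖ ≤ t ∧ g y = HLu g x t}

/-!
Every minimizer `y ∈ L(x,t)` touches `u(·,t)` from above at `x` in two ways: by the translate
`x + v ↦ g(y + v)`, and by the constant `g(y)` on the closed ball of radius `t` around `y`. If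
`u(·,t)` has gradient `q` at `x`, the first contact gives `q = Dg(y)` wherever `g` is
differentiable at `y`. By the second, `x` maximizes `u(·,t)` on that ball, so `q ≠ 0` forces
`x - y` to be the vector of length `t` in the direction of `q`, and `y` is then unique.
-/

section Contact

variable {E : Type*} [NormedAddCommGroup E] [NormedSpace ℝ E]

theorem hasFDerivAt_eq_of_comp_add_le {f g : E → ℝ} {f' g' : E →L[ℝ] ℝ} {x y : E}
    (hf : HasFDerivAt f f' x) (hg : HasFDerivAt g g' y) (heq : f x = g y)
    (hle : ∀ᶠ v in 𝓝 0, f (x + v) ≤ g (y + v)) : f' = g' := by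
  have hf₀ : HasFDerivAt (fun v => f (x + v)) f' 0 :=
    (hasFDerivAt_comp_add_left x).2 (by rwa [add_zero])
  have hg₀ : HasFDerivAt (fun v => g (y + v)) g' 0 :=
    (hasFDerivAt_comp_add_left y).2 (by rwa [add_zero])
  have hmin : IsLocalMin (fun v => g (y + v) - f (x + v)) 0 := by
    filter_upwards [hle] with v hv
    simpa only [add_zero, heq, sub_self, sub_nonneg] using hv
  exact (sub_eq_zero.1 (hmin.hasFDerivAt_eq_zero (hg₀.sub hf₀))).symm

end Contact

section Ball

variable {E : Type*} [NormedAddCommGroup E] [InnerProductSpace ℝ E]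

theorem eq_smul_of_mul_norm_le_inner {p w : E} {r : ℝ} (hp : p ≠ 0) (hw : ‖w‖ ≤ r)
    (hinner : r * ‖p‖ ≤ ⟪p, w⟫_ℝ) : w = (r / ‖p‖) • p := by
  have hp_pos : 0 < ‖p‖ := norm_pos_iff.2 hp
  have hcs : ⟪p, w⟫_ℝ ≤ ‖p‖ * ‖w‖ := real_inner_le_norm p w
  have hnorm : ‖w‖ = r := hw.antisymm (le_of_mul_le_mul_right (by linarith) hp_pos)
  have hparallel : ‖w‖ • p = ‖p‖ • w :=
    inner_eq_norm_mul_iff_real.1 (hcs.antisymm (by rwa [hnorm, mul_comm]))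
  rw [div_eq_inv_mul, mul_smul, ← hnorm, hparallel, inv_smul_smul₀ hp_pos.ne']

theorem sub_eq_smul_of_isMaxOn_closedBall [CompleteSpace E] {f : E → ℝ} {p c x : E} {r : ℝ}
    (hx : x ∈ Metric.closedBall c r) (hmax : IsMaxOn f (Metric.closedBall c r) x)
    (hf : HasGradientAt f p x) (hp : p ≠ 0) : x - c = (r / ‖p‖) • p := by
  have hr : 0 ≤ r := Metric.nonempty_closedBall.1 ⟨x, hx⟩
  have hp_norm : ‖p‖ ≠ 0 := norm_ne_zero_iff.2 hp
  have hz : c + (r / ‖p‖) • p ∈ Metric.closedBall c r := by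
    rw [mem_closedBall_iff_norm, add_sub_cancel_left, norm_smul, norm_div, norm_norm,
      div_mul_cancel₀ _ hp_norm, Real.norm_of_nonneg hr]
  have hslope : ⟪p, c + (r / ‖p‖) • p - x⟫_ℝ ≤ 0 :=
    hmax.localize.hasFDerivWithinAt_nonpos hf.hasFDerivAt.hasFDerivWithinAt
      (sub_mem_posTangentConeAt_of_segment_subset
        ((convex_closedBall c r).segment_subset hx hz))
  refine eq_smul_of_mul_norm_le_inner hp (mem_closedBall_iff_norm.1 hx) ?_
  calc r * ‖p‖ = ⟪p, (r / ‖p‖) • p⟫_ℝ := by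
        rw [inner_smul_right, real_inner_self_eq_norm_sq]; field_simp
    _ = ⟪p, c + (r / ‖p‖) • p - x⟫_ℝ + ⟪p, x - c⟫_ℝ := by
        rw [← inner_add_right]; congr 1; abel
    _ ≤ ⟪p, x - c⟫_ℝ := add_le_of_nonpos_left hslope

end Ball

section HopfLax

variable {n : ℕ} {g : Euc n → ℝ} {x y p q : Euc n} {t : ℝ}

theorem HLu_le (hg : LowerSemicontinuous g) (hy : ‖y - x‖ ≤ t) : HLu g x t ≤ g y :=
  csInf_le ((hg.lowerSemicontinuousOn _).bddBelow_of_isCompact (isCompact_closedBall x t))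
    ⟨y, mem_closedBall_iff_norm.2 hy, rfl⟩

theorem HLu_add_le_of_mem_HLL (hg : LowerSemicontinuous g) (hy : y ∈ HLL g x t) (v : Euc n) :
    HLu g (x + v) t ≤ g (y + v) :=
  HLu_le hg (by simpa only [add_sub_add_right_eq_sub] using hy.1)

theorem isMaxOn_HLu_of_mem_HLL (hg : LowerSemicontinuous g) (hy : y ∈ HLL g x t) :
    IsMaxOn (fun z => HLu g z t) (Metric.closedBall y t) x := fun _ hz =>
  (HLu_le hg (mem_closedBall_iff_norm'.1 hz)).trans_eq hy.2

theorem gradient_HLu_eq_of_mem_HLL (hg : LowerSemicontinuous g) (hy : y ∈ HLL g x t)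
    (hu : HasGradientAt (fun z => HLu g z t) q x) (hp : HasGradientAt g p y) : q = p :=
  (InnerProductSpace.toDual ℝ (Euc n)).injective <|
    hasFDerivAt_eq_of_comp_add_le hu.hasFDerivAt hp.hasFDerivAt hy.2.symm
      (.of_forall (HLu_add_le_of_mem_HLL hg hy))

theorem sub_eq_smul_of_mem_HLL (hg : LowerSemicontinuous g) (hy : y ∈ HLL g x t)
    (hu : HasGradientAt (fun z => HLu g z t) q x) (hq : q ≠ 0) : x - y = (t / ‖q‖) • q :=
  sub_eq_smul_of_isMaxOn_closedBall (mem_closedBall_iff_norm'.2 hy.1)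
    (isMaxOn_HLu_of_mem_HLL hg hy) hu hq

end HopfLax

theorem not_differentiable_of_two_minimizers_general {n : ℕ} {g : Euc n → ℝ}
    (hg : LowerSemicontinuous g) {x₀ y₁ y₂ p : Euc n} {t₀ : ℝ} (hy₁ : y₁ ∈ HLL g x₀ t₀)
    (hy₂ : y₂ ∈ HLL g x₀ t₀) (hne : y₁ ≠ y₂) (hp : HasGradientAt g p y₁) (hp_ne : p ≠ 0) :
    ¬ DifferentiableAt ℝ (fun x => HLu g x t₀) x₀ := by
  intro hdiff
  have hu : HasGradientAt (fun x => HLu g x t₀) p x₀ :=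
    gradient_HLu_eq_of_mem_HLL hg hy₁ hdiff.hasGradientAt hp ▸ hdiff.hasGradientAt
  have hsub : x₀ - y₁ = x₀ - y₂ :=
    (sub_eq_smul_of_mem_HLL hg hy₁ hu hp_ne).trans (sub_eq_smul_of_mem_HLL hg hy₂ hu hp_ne).symm
  exact hne (sub_right_injective hsub)

theorem not_differentiable_of_two_minimizers {n : ℕ} (hn : 0 < n) (g : Euc n → ℝ) (Dg : Euc n → Euc n)
    (hg : ∀ y, HasGradientAt g (Dg y) y) (hDg : Continuous Dg)
    (x₀ : Euc n) (t₀ : ℝ) (ht₀ : 0 < t₀)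
    (y₁ y₂ : Euc n) (hy₁ : y₁ ∈ HLL g x₀ t₀) (hy₂ : y₂ ∈ HLL g x₀ t₀) (hne : y₁ ≠ y₂)
    (hDg₁ : Dg y₁ ≠ 0) :
    ¬ DifferentiableAt ℝ (fun p : Euc n × ℝ => HLu g p.1 p.2) (x₀, t₀) := by
  intro hdiff
  have hg_lsc : LowerSemicontinuous g :=
    (continuous_iff_continuousAt.2 fun y => (hg y).continuousAt).lowerSemicontinuous
  have hdiff_space : DifferentiableAt ℝ (fun x => HLu g x t₀) x₀ :=
    hdiff.comp (g := fun p : Euc n × ℝ => HLu g p.1 p.2) (f := fun x => (x, t₀)) x₀ (by fun_prop)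
  exact not_differentiable_of_two_minimizers_general hg_lsc hy₁ hy₂ hne (hg y₁) hDg₁ hdiff_space
end
end

section
/- For any y₀ ∈ ℝⁿ with Dg(y₀) ≠ 0, one has limsup_{y → y₀} t̄ₛ(y) = limsup_{y → y₀} tₛ(y) = tₛ(y₀), where the limsups are taken in the extended reals [0,∞] along the punctured neighborhood filter of y₀ (this also holds when tₛ(y₀) = ∞; note Dg ≠ 0 near y₀ so t̄ₛ and tₛ are defined there). -/
open scoped InnerProductSpace Topology ENNReal
open Filter

noncomputable section

/-- The characteristic from `y₀`: `X(y₀,t) = y₀ + t • Dg(y₀)/|Dg(y₀)|`. -/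
def charX {n : ℕ} (Dg : Euc n → Euc n) (y₀ : Euc n) (t : ℝ) : Euc n :=
  y₀ + t • (‖Dg y₀‖⁻¹ • Dg y₀)

/-- First termination time `t̄ₛ(y₀) = sup {t > 0 : L(X(y₀,t),t) = {y₀}}`, in `[0,∞]`
(`sup ∅ = 0`). -/
def tbar {n : ℕ} (g : Euc n → ℝ) (Dg : Euc n → Euc n) (y₀ : Euc n) : ℝ≥0∞ :=
  sSup (ENNReal.ofReal '' {t : ℝ | 0 < t ∧ HLL g (charX Dg y₀ t) t = {y₀}})

/-- Second termination time `tₛ(y₀) = inf {t > 0 : y₀ ∉ L(X(y₀,t),t)}`, in `[0,∞]`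
(`inf ∅ = ∞`). -/
def tsnd {n : ℕ} (g : Euc n → ℝ) (Dg : Euc n → Euc n) (y₀ : Euc n) : ℝ≥0∞ :=
  sInf (ENNReal.ofReal '' {t : ℝ | 0 < t ∧ y₀ ∉ HLL g (charX Dg y₀ t) t})

/-!
The balls `closedBall (X(y, t)) t` along a characteristic are nested and touch only at `y`, so a
competitor of `y` at time `t` lies in the open ball at any later time. Competitors in an open ball
persist when `y` moves, which makes `tₛ` upper semicontinuous.

Conversely, let `t < T < R < tₛ(y₀)`. Shift the center of the ball of radius `T` slightly back along
the characteristic, to `X(y₀, r)` with `r < T`. Then `y₀` is interior to the ball and not critical,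
so every minimizer `y` satisfies `g y < g y₀` and therefore lies outside `closedBall (X(y₀, R)) R`.
The remaining crescent shrinks to `y₀` as `r → T`. By Lagrange multipliers `X(y₀, r) = X(y, T)`, so
`y` is a minimizer along its own characteristic at time `T`, hence the unique one at time `t`, and
`t̄ₛ(y) ≥ t` for points `y ≠ y₀` arbitrarily close to `y₀`.
-/

section Balls

open Metric

theorem norm_inv_norm_smul_le_one {E : Type*} [SeminormedAddCommGroup E] [NormedSpace ℝ E]
    (v : E) : ‖‖v‖⁻¹ • v‖ ≤ 1 :=
  mem_closedBall_zero_iff.1 (inv_norm_smul_mem_unitClosedBall v)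

theorem closedBall_add_smul_subset {E : Type*} [SeminormedAddCommGroup E] [NormedSpace ℝ E]
    {v : E} (hv : ‖v‖ ≤ 1) (y : E) {s t : ℝ} (hst : s ≤ t) :
    closedBall (y + s • v) s ⊆ closedBall (y + t • v) t := by
  apply closedBall_subset_closedBall'
  calc s + dist (y + s • v) (y + t • v) = s + (t - s) * ‖v‖ := by
        rw [dist_add_left, dist_comm, dist_eq_norm, ← sub_smul, norm_smul,
          Real.norm_of_nonneg (sub_nonneg.2 hst)]
    _ ≤ s + (t - s) * 1 := by gcongr
    _ = t := by ring

theorem self_mem_closedBall_add_smul {E : Type*} [SeminormedAddCommGroup E] [NormedSpace ℝ E]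
    {v : E} (hv : ‖v‖ ≤ 1) (y : E) {t : ℝ} (ht : 0 ≤ t) : y ∈ closedBall (y + t • v) t :=
  closedBall_add_smul_subset hv y ht (by simp)

theorem mem_ball_add_smul_of_mem_closedBall {E : Type*} [NormedAddCommGroup E] [NormedSpace ℝ E]
    [StrictConvexSpace ℝ E] {v y z : E} (hv : ‖v‖ ≤ 1) {s t : ℝ} (hs : 0 ≤ s) (hst : s < t)
    (hzy : z ≠ y) (hz : z ∈ closedBall (y + s • v) s) : z ∈ ball (y + t • v) t := by
  rcases hs.eq_or_lt with rfl | hs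
  · simp [hzy] at hz
  have ht : 0 < t := hs.trans hst
  -- The homothety at `y` of ratio `t / s` carries the small ball onto the large one.
  let w := y + (t / s) • (z - y)
  have hw : w ∈ closedBall (y + t • v) t := by
    have hdilate : w - (y + t • v) = (t / s) • (z - (y + s • v)) := by
      have : t • v = (t / s) • s • v := by rw [smul_smul, div_mul_cancel₀ t hs.ne']
      rw [this]
      module
    rw [mem_closedBall_iff_norm] at hz ⊢
    rw [hdilate, norm_smul, Real.norm_of_nonneg (by positivity)]
    calc t / s * ‖z - (y + s • v)‖ ≤ t / s * s := by gcongr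
      _ = t := div_mul_cancel₀ t hs.ne'
  have hwy : w ≠ y := by
    simpa [w, sub_eq_zero, hs.ne', ht.ne'] using hzy
  have hcombo : z = (s / t) • w + (1 - s / t) • y := by
    have : (s / t) • (t / s) • (z - y) = z - y := by
      rw [smul_smul, div_mul_div_cancel₀ ht.ne', div_self hs.ne', one_smul]
    simp only [w, smul_add, this]
    module
  rw [hcombo]
  exact combo_mem_ball_of_ne hw (self_mem_closedBall_add_smul hv y ht.le) hwy (by positivity)
    (sub_pos.2 ((div_lt_one ht).2 hst)) (add_sub_cancel _ _)

variable {E : Type*} [NormedAddCommGroup E] [InnerProductSpace ℝ E]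

theorem mul_dist_sq_le_of_mem_closedBall_of_notMem {v y z : E} (hv : ‖v‖ ≤ 1) {r T R : ℝ}
    (hr : 0 ≤ r) (hrR : r ≤ R) (hz : z ∈ closedBall (y + r • v) T)
    (hz' : z ∉ closedBall (y + R • v) R) :
    (R - r) * dist z y ^ 2 ≤ R * (T ^ 2 - r ^ 2) := by
  have hR : 0 ≤ R := hr.trans hrR
  have norm_sq (a : ℝ) : ‖z - (y + a • v)‖ ^ 2
      = dist z y ^ 2 - 2 * a * ⟪z - y, v⟫_ℝ + a ^ 2 * ‖v‖ ^ 2 := by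
    rw [← sub_sub, norm_sub_sq_real, inner_smul_right, norm_smul, mul_pow, Real.norm_eq_abs,
      sq_abs, dist_eq_norm]
    ring
  rw [mem_closedBall_iff_norm] at hz hz'
  have hinside : ‖z - (y + r • v)‖ ^ 2 ≤ T ^ 2 := by gcongr
  have houtside : R ^ 2 ≤ ‖z - (y + R • v)‖ ^ 2 := by gcongr; exact (not_le.1 hz').le
  rw [norm_sq] at hinside houtside
  have hv_sq : ‖v‖ ^ 2 ≤ 1 := pow_le_one₀ (norm_nonneg v) hv
  -- Eliminate the inner product between the two ball conditions.
  linear_combination R * hinside + r * houtside + R * r * (R - r) * hv_sq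

theorem eventually_closedBall_diff_closedBall_subset_ball {v : E} (hv : ‖v‖ ≤ 1) (y : E)
    {T R δ : ℝ} (hT : 0 < T) (hTR : T < R) (hδ : 0 < δ) :
    ∀ᶠ r in 𝓝 T, closedBall (y + r • v) T \ closedBall (y + R • v) R ⊆ ball y δ := by
  have hlim : ∀ᶠ r in 𝓝 T, R * (T ^ 2 - r ^ 2) < (R - r) * δ ^ 2 := by
    refine ContinuousAt.eventually_lt (by fun_prop) (by fun_prop) ?_
    rw [sub_self, mul_zero]
    exact mul_pos (sub_pos.2 hTR) (by positivity)
  filter_upwards [hlim, lt_mem_nhds hT, gt_mem_nhds hTR] with r hr hr0 hrR z ⟨hz, hz'⟩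
  have hdist := (mul_dist_sq_le_of_mem_closedBall_of_notMem hv hr0.le hrR.le hz hz').trans_lt hr
  exact lt_of_pow_lt_pow_left₀ 2 hδ.le (lt_of_mul_lt_mul_left hdist (sub_pos.2 hrR).le)

end Balls

section Gradient

variable {E : Type*} [NormedAddCommGroup E] [InnerProductSpace ℝ E] [CompleteSpace E]
  {g : E → ℝ} {G y : E}

theorem not_isLocalMin_of_hasGradientAt (hg : HasGradientAt g G y) (hG : G ≠ 0) :
    ¬ IsLocalMin g y := fun hmin =>
  hG ((InnerProductSpace.toDual ℝ E).map_eq_zero_iff.1 (hmin.hasFDerivAt_eq_zero hg.hasFDerivAt))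

theorem inner_gradient_sub_nonneg_of_isMinOn {s : Set E} (hs : Convex ℝ s)
    (hg : HasGradientAt g G y) (hy : y ∈ s) (hmin : IsMinOn g s y) {z : E} (hz : z ∈ s) :
    0 ≤ ⟪G, z - y⟫_ℝ :=
  hmin.localize.hasFDerivWithinAt_nonneg hg.hasFDerivAt.hasFDerivWithinAt
    (sub_mem_posTangentConeAt_of_segment_subset (hs.segment_subset hy hz))

theorem center_eq_of_isMinOn_closedBall {x : E} {T : ℝ} (hg : HasGradientAt g G y) (hG : G ≠ 0)
    (hy : y ∈ Metric.closedBall x T) (hmin : IsMinOn g (Metric.closedBall x T) y) :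
    x = y + T • (‖G‖⁻¹ • G) := by
  have hT : 0 ≤ T := dist_nonneg.trans hy
  have hGpos : 0 < ‖G‖ := norm_pos_iff.2 hG
  have hxy : ‖x - y‖ ≤ T := by rwa [← mem_closedBall_iff_norm']
  -- The point of the ball where the linearization of `g` is smallest.
  have hlow : x - T • (‖G‖⁻¹ • G) ∈ Metric.closedBall x T := by
    simp [norm_smul, hGpos.ne', abs_of_nonneg hT]
  have hinner : ‖G‖ * T ≤ ⟪G, x - y⟫_ℝ := by
    have hnonneg := inner_gradient_sub_nonneg_of_isMinOn (convex_closedBall x T) hg hy hmin hlow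
    rw [sub_right_comm, inner_sub_right, inner_smul_right, inner_smul_right,
      real_inner_self_eq_norm_sq] at hnonneg
    field_simp at hnonneg
    linarith
  have hnorm : ‖x - y‖ = T := le_antisymm hxy
    (le_of_mul_le_mul_left (hinner.trans (real_inner_le_norm G (x - y))) hGpos)
  have hparallel : ‖x - y‖ • G = ‖G‖ • (x - y) :=
    inner_eq_norm_mul_iff_real.1 (le_antisymm (real_inner_le_norm _ _) (by rwa [hnorm]))
  rw [smul_comm, ← hnorm, hparallel, inv_smul_smul₀ hGpos.ne', add_sub_cancel]

end Gradient

theorem exists_lt_ofReal_lt {t : ℝ} {c : ℝ≥0∞} (ht : 0 ≤ t) (htc : ENNReal.ofReal t < c) :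
    ∃ s, t < s ∧ ENNReal.ofReal s < c := by
  obtain ⟨s, -, hts, hsc⟩ := ENNReal.lt_iff_exists_real_btwn.1 htc
  exact ⟨s, (ENNReal.ofReal_lt_ofReal_iff_of_nonneg ht).1 hts, hsc⟩

section HopfLax

open Metric

variable {n : ℕ} {g : Euc n → ℝ} {Dg : Euc n → Euc n} {y y₀ : Euc n}

theorem mem_HLL_iff (hg : LowerSemicontinuous g) {x : Euc n} {t : ℝ} :
    y ∈ HLL g x t ↔ y ∈ closedBall x t ∧ IsMinOn g (closedBall x t) y := by
  rw [mem_closedBall_iff_norm]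
  refine and_congr_right fun hy => ⟨fun hmin => isMinOn_iff.2 fun z hz => ?_, fun hmin => ?_⟩
  · rw [hmin]
    exact csInf_le ((hg.lowerSemicontinuousOn _).bddBelow_of_isCompact (isCompact_closedBall x t))
      (Set.mem_image_of_mem g hz)
  · have hleast : IsLeast (g '' closedBall x t) (g y) :=
      ⟨Set.mem_image_of_mem g (mem_closedBall_iff_norm.2 hy), Set.forall_mem_image.2 hmin⟩
    exact hleast.csInf_eq.symm

theorem HLL_nonempty (hg : LowerSemicontinuous g) (x : Euc n) {t : ℝ} (ht : 0 ≤ t) :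
    (HLL g x t).Nonempty := by
  obtain ⟨y, hy, hmin⟩ := (hg.lowerSemicontinuousOn _).exists_isMinOn (nonempty_closedBall.2 ht)
    (isCompact_closedBall x t)
  exact ⟨y, (mem_HLL_iff hg).2 ⟨hy, hmin⟩⟩

theorem isLocalMin_of_mem_HLL_of_mem_ball (hg : LowerSemicontinuous g) {x : Euc n} {t : ℝ}
    (hy : y ∈ HLL g x t) (hball : y ∈ ball x t) : IsLocalMin g y :=
  ((mem_HLL_iff hg).1 hy).2.isLocalMin (closedBall_mem_nhds_of_mem hball)

theorem mem_closedBall_charX (Dg : Euc n → Euc n) (y : Euc n) {t : ℝ} (ht : 0 ≤ t) :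
    y ∈ closedBall (charX Dg y t) t :=
  self_mem_closedBall_add_smul (norm_inv_norm_smul_le_one _) y ht

theorem mem_ball_charX_of_mem_closedBall {z : Euc n} {s t : ℝ} (hs : 0 ≤ s) (hst : s < t)
    (hzy : z ≠ y) (hz : z ∈ closedBall (charX Dg y s) s) : z ∈ ball (charX Dg y t) t :=
  mem_ball_add_smul_of_mem_closedBall (norm_inv_norm_smul_le_one _) hs hst hzy hz

theorem continuousAt_charX (hDg : ContinuousAt Dg y₀) (hy₀ : Dg y₀ ≠ 0) (t : ℝ) :
    ContinuousAt (fun y => charX Dg y t) y₀ :=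
  continuousAt_id.add (((hDg.norm.inv₀ (norm_ne_zero_iff.2 hy₀)).smul hDg).const_smul t)

theorem mem_HLL_charX_of_le (hg : LowerSemicontinuous g) {s t : ℝ} (hs : 0 ≤ s) (hst : s ≤ t)
    (hy : y ∈ HLL g (charX Dg y t) t) : y ∈ HLL g (charX Dg y s) s :=
  (mem_HLL_iff hg).2 ⟨mem_closedBall_charX Dg y hs, ((mem_HLL_iff hg).1 hy).2.on_subset
    (closedBall_add_smul_subset (norm_inv_norm_smul_le_one _) y hst)⟩

theorem charX_eq_of_mem_HLL (hg : LowerSemicontinuous g) {x : Euc n} {t : ℝ}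
    (hDg : HasGradientAt g (Dg y) y) (hy : Dg y ≠ 0) (hmem : y ∈ HLL g x t) :
    charX Dg y t = x :=
  have ⟨hball, hmin⟩ := (mem_HLL_iff hg).1 hmem
  (center_eq_of_isMinOn_closedBall hDg hy hball hmin).symm

theorem HLL_charX_eq_singleton (hg : LowerSemicontinuous g) {t T : ℝ} (ht : 0 ≤ t) (htT : t < T)
    (hy : y ∈ HLL g (charX Dg y T) T)
    (hcrit : ∀ z ∈ HLL g (charX Dg y T) T, ¬ IsLocalMin g z) :
    HLL g (charX Dg y t) t = {y} := by
  have hyt : y ∈ HLL g (charX Dg y t) t := mem_HLL_charX_of_le hg ht htT.le hy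
  refine Set.eq_singleton_iff_unique_mem.2 ⟨hyt, fun z hz => ?_⟩
  by_contra hzy
  have hzball : z ∈ ball (charX Dg y T) T :=
    mem_ball_charX_of_mem_closedBall ht htT hzy ((mem_HLL_iff hg).1 hz).1
  have hzT : z ∈ HLL g (charX Dg y T) T :=
    ⟨(mem_ball_iff_norm.1 hzball).le, (hz.2.trans hyt.2.symm).trans hy.2⟩
  exact hcrit z hzT (isLocalMin_of_mem_HLL_of_mem_ball hg hzT hzball)

theorem eventually_notMem_HLL_charX (hg : LowerSemicontinuous g) (hDg : ContinuousAt Dg y₀)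
    (hy₀ : Dg y₀ ≠ 0) {s t : ℝ} (hs : 0 ≤ s) (hst : s < t)
    (hnot : y₀ ∉ HLL g (charX Dg y₀ s) s) : ∀ᶠ y in 𝓝 y₀, y ∉ HLL g (charX Dg y t) t := by
  obtain ⟨z, hz, hgz⟩ : ∃ z ∈ closedBall (charX Dg y₀ s) s, g z < g y₀ := by
    simpa [mem_HLL_iff hg, mem_closedBall_charX Dg y₀ hs, isMinOn_iff] using hnot
  have hzball : z ∈ ball (charX Dg y₀ t) t :=
    mem_ball_charX_of_mem_closedBall hs hst (ne_of_apply_ne g hgz.ne) hz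
  have hzball_near : ∀ᶠ y in 𝓝 y₀, z ∈ ball (charX Dg y t) t :=
    (continuousAt_const.dist (continuousAt_charX hDg hy₀ t)).eventually (gt_mem_nhds hzball)
  filter_upwards [hzball_near, hg y₀ _ hgz] with y hzy hgy hmem
  exact hgy.not_ge (((mem_HLL_iff hg).1 hmem).2 (ball_subset_closedBall hzy))

theorem eventually_HLL_charX_subset (hg : LowerSemicontinuous g) (hy₀ : ¬ IsLocalMin g y₀)
    {T R : ℝ} (hT : 0 < T) (hTR : T < R) (hmem : y₀ ∈ HLL g (charX Dg y₀ R) R)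
    {U : Set (Euc n)} (hU : U ∈ 𝓝[≠] y₀) :
    ∀ᶠ r in 𝓝[<] T, HLL g (charX Dg y₀ r) T ⊆ U := by
  obtain ⟨δ, hδ, hδU⟩ := mem_nhdsWithin_iff.1 hU
  have hcrescent := eventually_closedBall_diff_closedBall_subset_ball
    (norm_inv_norm_smul_le_one (Dg y₀)) y₀ hT hTR hδ
  filter_upwards [hcrescent.filter_mono nhdsWithin_le_nhds, self_mem_nhdsWithin,
    (lt_mem_nhds hT).filter_mono nhdsWithin_le_nhds] with r hr hrT hr0 z hz
  obtain ⟨hzball, hzmin⟩ := (mem_HLL_iff hg).1 hz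
  have hinterior : y₀ ∈ ball (charX Dg y₀ r) T :=
    closedBall_subset_ball hrT (mem_closedBall_charX Dg y₀ hr0.le)
  have hlt : g z < g y₀ := by
    by_contra! hle
    exact hy₀ ((show IsMinOn g (closedBall (charX Dg y₀ r) T) y₀ from
      fun w hw => hle.trans (hzmin hw)).isLocalMin (closedBall_mem_nhds_of_mem hinterior))
  have houtside : z ∉ closedBall (charX Dg y₀ R) R := fun hzR =>
    hlt.not_ge (((mem_HLL_iff hg).1 hmem).2 hzR)
  exact hδU ⟨hr ⟨hzball, houtside⟩, ne_of_apply_ne g hlt.ne⟩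

theorem frequently_HLL_charX_eq_singleton (hg : LowerSemicontinuous g)
    (hgrad : ∀ᶠ y in 𝓝 y₀, HasGradientAt g (Dg y) y) (hDg : ContinuousAt Dg y₀)
    (hy₀ : Dg y₀ ≠ 0) {t R : ℝ} (ht : 0 ≤ t) (htR : t < R)
    (hmem : y₀ ∈ HLL g (charX Dg y₀ R) R) :
    ∃ᶠ y in 𝓝[≠] y₀, HLL g (charX Dg y t) t = {y} := by
  obtain ⟨T, htT, hTR⟩ := exists_between htR
  have hT : 0 < T := ht.trans_lt htT
  have hregular : ∀ᶠ y in 𝓝[≠] y₀, HasGradientAt g (Dg y) y ∧ Dg y ≠ 0 :=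
    (hgrad.and (hDg.eventually_ne hy₀)).filter_mono nhdsWithin_le_nhds
  refine frequently_iff.2 fun {U} hU => ?_
  obtain ⟨r, hr⟩ := (eventually_HLL_charX_subset hg
    (not_isLocalMin_of_hasGradientAt hgrad.self_of_nhds hy₀) hT hTR hmem
    (inter_mem hU hregular)).exists
  obtain ⟨y, hy⟩ := HLL_nonempty hg (charX Dg y₀ r) hT.le
  obtain ⟨hyU, hygrad, hyne⟩ := hr hy
  have hcenter : charX Dg y T = charX Dg y₀ r := charX_eq_of_mem_HLL hg hygrad hyne hy
  rw [← hcenter] at hr hy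
  exact ⟨y, hyU, HLL_charX_eq_singleton hg ht htT hy fun z hz =>
    not_isLocalMin_of_hasGradientAt (hr hz).2.1 (hr hz).2.2⟩

end HopfLax

section TerminationTimes

variable {n : ℕ} {g : Euc n → ℝ} {Dg : Euc n → Euc n} {y y₀ : Euc n}

theorem ofReal_le_tbar {t : ℝ} (ht : 0 < t) (hL : HLL g (charX Dg y t) t = {y}) :
    ENNReal.ofReal t ≤ tbar g Dg y :=
  le_sSup ⟨t, ⟨ht, hL⟩, rfl⟩

theorem tsnd_le_ofReal {t : ℝ} (ht : 0 < t) (hy : y ∉ HLL g (charX Dg y t) t) :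
    tsnd g Dg y ≤ ENNReal.ofReal t :=
  sInf_le ⟨t, ⟨ht, hy⟩, rfl⟩

theorem tbar_le_tsnd (hg : LowerSemicontinuous g) (Dg : Euc n → Euc n) (y : Euc n) :
    tbar g Dg y ≤ tsnd g Dg y := by
  refine sSup_le (Set.forall_mem_image.2 fun t ⟨_, hL⟩ => ?_)
  refine le_sInf (Set.forall_mem_image.2 fun s ⟨hs, hnot⟩ => ENNReal.ofReal_le_ofReal ?_)
  by_contra! hst
  exact hnot (mem_HLL_charX_of_le hg hs.le hst.le (hL ▸ Set.mem_singleton y))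

theorem upperSemicontinuousAt_tsnd (hg : LowerSemicontinuous g) (hDg : ContinuousAt Dg y₀)
    (hy₀ : Dg y₀ ≠ 0) : UpperSemicontinuousAt (tsnd g Dg) y₀ := by
  refine upperSemicontinuousAt_iff.2 fun c hc => ?_
  obtain ⟨_, ⟨s, ⟨hs, hnot⟩, rfl⟩, hsc⟩ := sInf_lt_iff.1 hc
  obtain ⟨t, hst, htc⟩ := exists_lt_ofReal_lt hs.le hsc
  filter_upwards [eventually_notMem_HLL_charX hg hDg hy₀ hs.le hst hnot] with y hy
  exact (tsnd_le_ofReal (hs.trans hst) hy).trans_lt htc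

theorem tsnd_le_limsup_tbar (hg : LowerSemicontinuous g)
    (hgrad : ∀ᶠ y in 𝓝 y₀, HasGradientAt g (Dg y) y) (hDg : ContinuousAt Dg y₀)
    (hy₀ : Dg y₀ ≠ 0) : tsnd g Dg y₀ ≤ limsup (tbar g Dg) (𝓝[≠] y₀) := by
  refine le_of_forall_lt_imp_le_of_dense fun c hc => ?_
  obtain ⟨t, -, hct, htc⟩ := ENNReal.lt_iff_exists_real_btwn.1 hc
  have ht : 0 < t := ENNReal.ofReal_pos.1 (pos_of_gt hct)
  obtain ⟨R, htR, hRc⟩ := exists_lt_ofReal_lt ht.le htc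
  have hmem : y₀ ∈ HLL g (charX Dg y₀ R) R := by
    by_contra hnot
    exact hRc.not_ge (tsnd_le_ofReal (ht.trans htR) hnot)
  exact le_limsup_of_frequently_le
    ((frequently_HLL_charX_eq_singleton hg hgrad hDg hy₀ ht.le htR hmem).mono
      fun y hy => hct.le.trans (ofReal_le_tbar ht hy))

theorem limsup_termination_times_general (hg : LowerSemicontinuous g)
    (hgrad : ∀ᶠ y in 𝓝 y₀, HasGradientAt g (Dg y) y) (hDg : ContinuousAt Dg y₀)
    (hy₀ : Dg y₀ ≠ 0) :
    limsup (tbar g Dg) (𝓝[≠] y₀) = tsnd g Dg y₀ ∧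
    limsup (tsnd g Dg) (𝓝[≠] y₀) = tsnd g Dg y₀ := by
  have lower : tsnd g Dg y₀ ≤ limsup (tbar g Dg) (𝓝[≠] y₀) :=
    tsnd_le_limsup_tbar hg hgrad hDg hy₀
  have middle : limsup (tbar g Dg) (𝓝[≠] y₀) ≤ limsup (tsnd g Dg) (𝓝[≠] y₀) :=
    limsup_le_limsup (.of_forall (tbar_le_tsnd hg Dg))
  have upper : limsup (tsnd g Dg) (𝓝[≠] y₀) ≤ tsnd g Dg y₀ :=
    ((upperSemicontinuousAt_tsnd hg hDg hy₀).upperSemicontinuousWithinAt _).limsup_le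
  exact ⟨(middle.trans upper).antisymm lower, upper.antisymm (lower.trans middle)⟩

end TerminationTimes

theorem limsup_termination_times {n : ℕ} (hn : 0 < n) (g : Euc n → ℝ) (Dg : Euc n → Euc n)
    (hg : ∀ y, HasGradientAt g (Dg y) y) (hDg : Continuous Dg)
    (y₀ : Euc n) (hy : Dg y₀ ≠ 0) :
    Filter.limsup (fun y => tbar g Dg y) (𝓝[≠] y₀) = tsnd g Dg y₀ ∧
    Filter.limsup (fun y => tsnd g Dg y) (𝓝[≠] y₀) = tsnd g Dg y₀ :=
  limsup_termination_times_general
    (continuous_iff_continuousAt.2 fun y => (hg y).continuousAt).lowerSemicontinuous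
    (.of_forall hg) hDg.continuousAt hy
end
end
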